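/- With the notation of the odd-case construction: the Weierstrass curve over R[u] with coefficients (a₁, a₂, a₃, a₄, a₆) = (0, 0, 0, p₀, q₀), i.e. the curve y² = x³ + p₀x + q₀, has discriminant zero; equivalently, −16(4p₀³ + 27q₀²) = 0 in R[u]. -/

import Mathlib

open Polynomial

/-!
For `v = a²` and `u = b²`, the roots of `oddPolynomial v u` are `0` (three times) and the 24 short
roots `±xᵢ`, `½(±x₁ ± x₂ ± x₃ ± x₄)` of `F₄`, evaluated at `x = (a, a, b, 3b)`: they are the 27
minuscule weights of `E₆` at a point of the Cartan subspace of `F₄`. The relations between the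
`ε m` and `p₂, …, q₀` are Shioda's formulas for the family
`y² = x³ + (p₂ t² + p₁ t + p₀) x + t⁴ + q₂ t² + q₁ t + q₀`. At the chosen point the long root
`x₁ - x₂` vanishes, which forces the fibre at `t = 0` to be singular. Concretely, solving Shioda's
relations one after the other gives `p₀ = -3c²` and `q₀ = 2c³` with `48c = (v - u)(v - 9u)`, so
that `x³ + p₀x + q₀ = (x - c)²(x + 2c)`.
-/

section OddPolynomial

variable {A : Type*} [CommRing A] (v u : A)

/-- The degree 27 polynomial `Q` of the odd case, with the constant `9` replaced by a variable `v`.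
This makes the coefficient of `X ^ (27 - 2 * k)` homogeneous of degree `k` in `v` and `u`. -/
noncomputable def oddPolynomial : A[X] :=
  X ^ 3 * (X ^ 2 - C v) ^ 2 * (X ^ 2 - C u) ^ 3 * (X ^ 2 - 4 * C u) ^ 2 * (X ^ 2 - 9 * C u) *
    (X ^ 4 - 2 * (C v + C u) * X ^ 2 + (C v - C u) ^ 2) *
    (X ^ 4 - 2 * (C v + 4 * C u) * X ^ 2 + (C v - 4 * C u) ^ 2)

theorem oddPolynomial_eq :
    oddPolynomial v u = X ^ 27 +
      C (-6 * v - 30 * u) * X ^ 25 +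
      C (15 * v ^ 2 + 150 * v * u + 375 * u ^ 2) * X ^ 23 +
      C (-20 * v ^ 3 - 320 * v ^ 2 * u - 1520 * v * u ^ 2 - 2580 * u ^ 3) * X ^ 21 +
      C (15 * v ^ 4 + 380 * v ^ 3 * u + 2600 * v ^ 2 * u ^ 2 + 8420 * v * u ^ 3 +
        10815 * u ^ 4) * X ^ 19 +
      C (-6 * v ^ 5 - 270 * v ^ 4 * u - 2508 * v ^ 3 * u ^ 2 - 11100 * v ^ 2 * u ^ 3 -
        28566 * v * u ^ 4 - 28830 * u ^ 5) * X ^ 17 +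
      C (v ^ 6 + 110 * v ^ 5 * u + 1563 * v ^ 4 * u ^ 2 + 7680 * v ^ 3 * u ^ 3 +
        29051 * v ^ 2 * u ^ 4 + 62110 * v * u ^ 5 + 49545 * u ^ 6) * X ^ 15 +
      C (-20 * v ^ 6 * u - 652 * v ^ 5 * u ^ 2 - 3300 * v ^ 4 * u ^ 3 - 13916 * v ^ 3 * u ^ 4 -
        48900 * v ^ 2 * u ^ 5 - 87892 * v * u ^ 6 - 54480 * u ^ 7) * X ^ 13 +
      C (142 * v ^ 6 * u ^ 2 + 1340 * v ^ 5 * u ^ 3 + 1581 * v ^ 4 * u ^ 4 +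
        21740 * v ^ 3 * u ^ 5 + 46342 * v ^ 2 * u ^ 6 + 82920 * v * u ^ 7 +
        36960 * u ^ 8) * X ^ 11 +
      C (-460 * v ^ 6 * u ^ 3 + 322 * v ^ 5 * u ^ 4 - 1590 * v ^ 4 * u ^ 5 -
        22564 * v ^ 3 * u ^ 6 - 18120 * v ^ 2 * u ^ 7 - 53408 * v * u ^ 8 -
        14080 * u ^ 9) * X ^ 9 +
      C (713 * v ^ 6 * u ^ 4 - 4010 * v ^ 5 * u ^ 5 + 10089 * v ^ 4 * u ^ 6 +
        3960 * v ^ 3 * u ^ 7 + 688 * v ^ 2 * u ^ 8 + 22400 * v * u ^ 9 + 2304 * u ^ 10) * X ^ 7 +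
      C (-520 * v ^ 6 * u ^ 5 + 4336 * v ^ 5 * u ^ 6 - 12840 * v ^ 4 * u ^ 7 +
        11008 * v ^ 3 * u ^ 8 - 2560 * v ^ 2 * u ^ 9 - 4608 * v * u ^ 10) * X ^ 5 +
      C (144 * v ^ 6 * u ^ 6 - 1440 * v ^ 5 * u ^ 7 + 4752 * v ^ 4 * u ^ 8 -
        5760 * v ^ 3 * u ^ 9 + 2304 * v ^ 2 * u ^ 10) * X ^ 3 := by
  rw [oddPolynomial]
  simp only [map_add, map_sub, map_neg, map_mul, map_pow, map_ofNat]
  ring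

theorem coeff_oddPolynomial_25 : (oddPolynomial v u).coeff 25 = -6 * v - 30 * u := by
  simp only [oddPolynomial_eq, coeff_add, coeff_C_mul, coeff_X_pow]
  simp

theorem coeff_oddPolynomial_22 : (oddPolynomial v u).coeff 22 = 0 := by
  simp only [oddPolynomial_eq, coeff_add, coeff_C_mul, coeff_X_pow]
  simp

theorem coeff_oddPolynomial_21 :
    (oddPolynomial v u).coeff 21 =
      -20 * v ^ 3 - 320 * v ^ 2 * u - 1520 * v * u ^ 2 - 2580 * u ^ 3 := by
  simp only [oddPolynomial_eq, coeff_add, coeff_C_mul, coeff_X_pow]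
  simp

theorem coeff_oddPolynomial_19 :
    (oddPolynomial v u).coeff 19 =
      15 * v ^ 4 + 380 * v ^ 3 * u + 2600 * v ^ 2 * u ^ 2 + 8420 * v * u ^ 3 +
        10815 * u ^ 4 := by
  simp only [oddPolynomial_eq, coeff_add, coeff_C_mul, coeff_X_pow]
  simp

theorem coeff_oddPolynomial_15 :
    (oddPolynomial v u).coeff 15 =
      v ^ 6 + 110 * v ^ 5 * u + 1563 * v ^ 4 * u ^ 2 + 7680 * v ^ 3 * u ^ 3 +
        29051 * v ^ 2 * u ^ 4 + 62110 * v * u ^ 5 + 49545 * u ^ 6 := by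
  simp only [oddPolynomial_eq, coeff_add, coeff_C_mul, coeff_X_pow]
  simp

end OddPolynomial

section ShiodaRelations

variable {A : Type*} [CommRing A] {v u p₂ p₁ q₂ p₀ q₀ : A}

theorem mul_p₂_eq (h2 : IsRegular (2 : A)) (h3 : IsRegular (3 : A))
    (hp₂ : 12 * p₂ = (oddPolynomial v u).coeff 25) :
    2 * p₂ = -(v + 5 * u) := by
  rw [coeff_oddPolynomial_25] at hp₂
  apply (h2.mul h3).left
  linear_combination hp₂

theorem p₁_eq_zero (h2 : IsRegular (2 : A)) (h3 : IsRegular (3 : A))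
    (hp₁ : 48 * p₁ = (oddPolynomial v u).coeff 22) :
    p₁ = 0 := by
  rw [coeff_oddPolynomial_22] at hp₁
  apply ((h2.pow 4).mul h3).left
  linear_combination hp₁

theorem mul_q₂_eq (hp₂ : 2 * p₂ = -(v + 5 * u))
    (hq₂ : 96 * q₂ = (oddPolynomial v u).coeff 21 - 168 * p₂ ^ 3) :
    96 * q₂ = v ^ 3 - 5 * v ^ 2 * u + 55 * v * u ^ 2 + 45 * u ^ 3 := by
  have hp₂_cube : (2 * p₂) ^ 3 = (-(v + 5 * u)) ^ 3 := by rw [hp₂]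
  rw [coeff_oddPolynomial_21] at hq₂
  linear_combination hq₂ - 21 * hp₂_cube

theorem mul_p₀_eq_neg_sq (h5 : IsRegular (5 : A)) (hp₂ : 2 * p₂ = -(v + 5 * u))
    (hq₂ : 96 * q₂ = v ^ 3 - 5 * v ^ 2 * u + 55 * v * u ^ 2 + 45 * u ^ 3)
    (hp₀ : 480 * p₀ = (oddPolynomial v u).coeff 19 - 294 * p₂ ^ 4 - 528 * p₂ * q₂) :
    768 * p₀ = -((v - u) * (v - 9 * u)) ^ 2 := by
  have hp₂_pow : (2 * p₂) ^ 4 = (-(v + 5 * u)) ^ 4 := by rw [hp₂]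
  have hp₂q₂ : (2 * p₂) * (96 * q₂) =
      -(v + 5 * u) * (v ^ 3 - 5 * v ^ 2 * u + 55 * v * u ^ 2 + 45 * u ^ 3) := by rw [hp₂, hq₂]
  rw [coeff_oddPolynomial_19] at hp₀
  apply h5.left
  linear_combination 8 * hp₀ - 147 * hp₂_pow - 22 * hp₂q₂

theorem mul_q₀_eq_cube (h2 : IsRegular (2 : A)) (h3 : IsRegular (3 : A)) (h5 : IsRegular (5 : A))
    (hp₂ : 2 * p₂ = -(v + 5 * u)) (hp₁ : p₁ = 0)
    (hq₂ : 96 * q₂ = v ^ 3 - 5 * v ^ 2 * u + 55 * v * u ^ 2 + 45 * u ^ 3)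
    (hp₀ : 768 * p₀ = -((v - u) * (v - 9 * u)) ^ 2)
    (hq₀ : 17280 * q₀ = (oddPolynomial v u).coeff 15 - 608 * p₁ ^ 2 * p₂ - 4768 * p₀ * p₂ ^ 2 -
      252 * p₂ ^ 6 - 1200 * p₂ ^ 3 * q₂ + 1248 * q₂ ^ 2) :
    55296 * q₀ = ((v - u) * (v - 9 * u)) ^ 3 := by
  have hp₂_pow : (2 * p₂) ^ 6 = (-(v + 5 * u)) ^ 6 := by rw [hp₂]
  have hp₀p₂ : (768 * p₀) * (2 * p₂) ^ 2 =
      -((v - u) * (v - 9 * u)) ^ 2 * (-(v + 5 * u)) ^ 2 := by rw [hp₀, hp₂]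
  have hp₂q₂ : (2 * p₂) ^ 3 * (96 * q₂) =
      (-(v + 5 * u)) ^ 3 * (v ^ 3 - 5 * v ^ 2 * u + 55 * v * u ^ 2 + 45 * u ^ 3) := by
    rw [hp₂, hq₂]
  have hq₂_sq : (96 * q₂) ^ 2 =
      (v ^ 3 - 5 * v ^ 2 * u + 55 * v * u ^ 2 + 45 * u ^ 3) ^ 2 := by rw [hq₂]
  rw [coeff_oddPolynomial_15, hp₁] at hq₀
  apply ((h2.mul h3).mul h5).left
  linear_combination 96 * hq₀ - 149 * hp₀p₂ - 378 * hp₂_pow - 150 * hp₂q₂ + 13 * hq₂_sq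

end ShiodaRelations

-- With `d = 48c` the hypotheses say `p = -3c²` and `q = 2c³`: `x³ + px + q` has double root `c`.
theorem cubic_discriminant_eq_zero {A : Type*} [CommRing A] {p q d : A}
    (h2 : IsRegular (2 : A)) (h3 : IsRegular (3 : A))
    (hp : 768 * p = -d ^ 2) (hq : 55296 * q = d ^ 3) :
    4 * p ^ 3 + 27 * q ^ 2 = 0 := by
  have hp_cube : (768 * p) ^ 3 = (-d ^ 2) ^ 3 := by rw [hp]
  have hq_sq : (55296 * q) ^ 2 = (d ^ 3) ^ 2 := by rw [hq]
  apply ((h2.pow 24).mul (h3.pow 3)).left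
  linear_combination 4 * hp_cube + 4 * hq_sq

theorem stmt_12_general {A : Type*} [CommRing A]
    (h2 : IsRegular (2 : A)) (h3 : IsRegular (3 : A)) (h5 : IsRegular (5 : A)) (v u : A)
    (ε : ℕ → A) (hε : ∀ m ≤ 27, ε m = (oddPolynomial v u).coeff (27 - m)) (p₂ p₁ q₂ p₀ q₀ : A)
    (hp₂ : 12 * p₂ = ε 2)
    (hp₁ : 48 * p₁ = ε 5)
    (hq₂ : 96 * q₂ = ε 6 - 168 * p₂ ^ 3)
    (hp₀ : 480 * p₀ = ε 8 - 294 * p₂ ^ 4 - 528 * p₂ * q₂)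
    (hq₀ : 17280 * q₀ = ε 12 - 608 * p₁ ^ 2 * p₂ - 4768 * p₀ * p₂ ^ 2 - 252 * p₂ ^ 6 -
      1200 * p₂ ^ 3 * q₂ + 1248 * q₂ ^ 2) :
    4 * p₀ ^ 3 + 27 * q₀ ^ 2 = 0 := by
  rw [hε _ (by norm_num)] at hp₂ hp₁ hq₂ hp₀ hq₀
  have p₂_eq := mul_p₂_eq h2 h3 hp₂
  have p₁_eq := p₁_eq_zero h2 h3 hp₁
  have q₂_eq := mul_q₂_eq p₂_eq hq₂
  have p₀_eq := mul_p₀_eq_neg_sq h5 p₂_eq q₂_eq hp₀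
  have q₀_eq := mul_q₀_eq_cube h2 h3 h5 p₂_eq p₁_eq q₂_eq p₀_eq hq₀
  exact cubic_discriminant_eq_zero h2 h3 p₀_eq q₀_eq

theorem isRegular_ofNat_of_isUnit {R : Type*} [CommRing R] {n : ℕ} [n.AtLeastTwo]
    (h : IsUnit (ofNat(n) : R)) : IsRegular (ofNat(n) : R[X]) := by
  simpa only [map_ofNat] using (h.map (C : R →+* R[X])).isRegular

theorem oddPolynomial_nine_X {R : Type*} [CommRing R] :
    oddPolynomial (9 : R[X]) X =
      X ^ 3 * (X ^ 2 - 9) ^ 2 * (X ^ 2 - C X) ^ 3 * (X ^ 2 - 4 * C X) ^ 2 * (X ^ 2 - 9 * C X) *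
        (X ^ 4 - (18 + 2 * C X) * X ^ 2 + (9 - C X) ^ 2) *
        (X ^ 4 - (18 + 8 * C X) * X ^ 2 + (9 - 4 * C X) ^ 2) := by
  rw [oddPolynomial, map_ofNat]
  ring

/-- Odd case: the Weierstrass curve `y² = x³ + p₀x + q₀` over `R[u]` has discriminant zero. -/
theorem stmt_12
    {R : Type*} [CommRing R]
    (h2 : IsUnit (2 : R)) (h3 : IsUnit (3 : R)) (h5 : IsUnit (5 : R)) (h7 : IsUnit (7 : R))
    (Q : Polynomial (Polynomial R))
    (hQ : Q = X ^ 3 * (X ^ 2 - 9) ^ 2 * (X ^ 2 - C X) ^ 3 * (X ^ 2 - 4 * C X) ^ 2 * (X ^ 2 - 9 * C X) *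
      
      (X ^ 4 - (18 + 2 * C X) * X ^ 2 + (9 - C X) ^ 2) *
      (X ^ 4 - (18 + 8 * C X) * X ^ 2 + (9 - 4 * C X) ^ 2))
    (ε : ℕ → Polynomial R) (hε : ∀ m ≤ 27, ε m = Q.coeff (27 - m))
    (p₂ p₁ q₂ p₀ q₁ q₀ : Polynomial R)
    (hp₂ : 12 * p₂ = ε 2)
    (hp₁ : 48 * p₁ = ε 5)
    (hq₂ : 96 * q₂ = ε 6 - 168 * p₂ ^ 3)
    (hp₀ : 480 * p₀ = ε 8 - 294 * p₂ ^ 4 - 528 * p₂ * q₂)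
    (hq₁ : 1344 * q₁ = ε 9 - 1008 * p₁ * p₂ ^ 2)
    (hq₀ : 17280 * q₀ = ε 12 - 608 * p₁ ^ 2 * p₂ - 4768 * p₀ * p₂ ^ 2 - 252 * p₂ ^ 6 -
      1200 * p₂ ^ 3 * q₂ + 1248 * q₂ ^ 2)
    : -16 * (4 * p₀ ^ 3 + 27 * q₀ ^ 2) = 0 := by
  rw [hQ, ← oddPolynomial_nine_X] at hε
  rw [stmt_12_general (isRegular_ofNat_of_isUnit h2) (isRegular_ofNat_of_isUnit h3)
    (isRegular_ofNat_of_isUnit h5) 9 X ε hε p₂ p₁ q₂ p₀ q₀ hp₂ hp₁ hq₂ hp₀ hq₀, mul_zero]
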